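/- arXiv:2512.12601 — 6 statements merged into one kernel-verified Lean document; each statement's English description precedes it below -/
import Mathlib

section
/- Let l_1, ..., l_N be unit vectors in ℝ^n that positively span ℝ^n and such that any n of them are linearly independent. Then there exists a constant c > 0, depending only on l_1, ..., l_N, with the following property: for all ε > 0, k_f > 0, and b ∈ ℝ^n, the unique minimizer s* of the quadratic program QP(b) satisfies |k_f ∑_{i=1}^N s_i* l_i − b|^2 ≤ ε c |b|^2 / k_f^2. -/
open InnerProductSpace

lemma posspan_bound {n N : ℕ} (L : Fin N → EuclideanSpace ℝ (Fin n))
    (hspan : ∀ l : EuclideanSpace ℝ (Fin n), ‖l‖ = 1 → ∃ i, 0 < ⟪l, L i⟫_ℝ) :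
    ∃ δ : ℝ, 0 < δ ∧ ∀ r : EuclideanSpace ℝ (Fin n),
      δ * ‖r‖ ^ 2 ≤ ∑ i, (max 0 ⟪r, L i⟫_ℝ) ^ 2 := by
  have hcont : Continuous (fun r : EuclideanSpace ℝ (Fin n) =>
      ∑ i, (max 0 ⟪r, L i⟫_ℝ) ^ 2) := by fun_prop
  have hex : ∃ δ : ℝ, 0 < δ ∧ ∀ l : EuclideanSpace ℝ (Fin n), ‖l‖ = 1 →
      δ ≤ ∑ i, (max 0 ⟪l, L i⟫_ℝ) ^ 2 := by
    rcases (Metric.sphere (0 : EuclideanSpace ℝ (Fin n)) 1).eq_empty_or_nonempty with h | h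
    · refine ⟨1, one_pos, fun l hl => ?_⟩
      have : l ∈ Metric.sphere (0 : EuclideanSpace ℝ (Fin n)) 1 := by simpa using hl
      rw [h] at this
      exact this.elim
    · obtain ⟨x, hx, hmin⟩ := (isCompact_sphere (0 : EuclideanSpace ℝ (Fin n)) 1).exists_isMinOn
        h hcont.continuousOn
      refine ⟨_, ?_, fun l hl => hmin (by simpa using hl)⟩
      obtain ⟨i, hi⟩ := hspan x (by simpa using hx)
      refine Finset.sum_pos' (fun j _ => sq_nonneg _) ⟨i, Finset.mem_univ _, ?_⟩
      have : 0 < max 0 ⟪x, L i⟫_ℝ := lt_max_of_lt_right hi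
      positivity
  obtain ⟨δ, hδ, h⟩ := hex
  refine ⟨δ, hδ, fun r => ?_⟩
  by_cases hr : r = 0
  · subst hr
    simp
  have hn : 0 < ‖r‖ := norm_pos_iff.mpr hr
  have h1 := h (‖r‖⁻¹ • r) (by rw [norm_smul, norm_inv, norm_norm, inv_mul_cancel₀ hn.ne'])
  calc δ * ‖r‖ ^ 2 ≤ (∑ i, (max 0 ⟪‖r‖⁻¹ • r, L i⟫_ℝ) ^ 2) * ‖r‖ ^ 2 := by gcongr
    _ = _ := by
      rw [Finset.sum_mul]
      refine Finset.sum_congr rfl fun i _ => ?_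
      rw [← mul_pow, max_mul_of_nonneg _ _ hn.le, real_inner_smul_left]
      congr 2
      · simp
      · field_simp

/-- If the unit vectors `l₁, …, l_N` positively span `ℝⁿ` and any `n`
of them are linearly independent, then there is `c > 0` depending only on the `lᵢ`
such that for all `ε, k_f > 0` and all `b`, the unique minimizer `s*` of `QP(b)`
satisfies `‖k_f ∑ᵢ sᵢ* lᵢ − b‖² ≤ ε c ‖b‖² / k_f²`. -/
theorem stmt_3 {n N : ℕ} (L : Fin N → EuclideanSpace ℝ (Fin n))
    (hunit : ∀ i, ‖L i‖ = 1)
    (hspan : ∀ l : EuclideanSpace ℝ (Fin n), ‖l‖ = 1 → ∃ i, 0 < ⟪l, L i⟫_ℝ)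
    (hindep : ∀ g : Fin n → Fin N, Function.Injective g →
      LinearIndependent ℝ (fun j => L (g j))) :
    ∃ c : ℝ, 0 < c ∧
      ∀ ε kf : ℝ, 0 < ε → 0 < kf → ∀ b : EuclideanSpace ℝ (Fin n),
        ∀ s : Fin N → ℝ,
          ((∀ i, 0 ≤ s i) ∧
            ∀ s' : Fin N → ℝ, (∀ i, 0 ≤ s' i) →
              ε * ∑ i, s i ^ 2 + ‖kf • ∑ i, s i • L i - b‖ ^ 2 ≤
                ε * ∑ i, s' i ^ 2 + ‖kf • ∑ i, s' i • L i - b‖ ^ 2) →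
          ‖kf • ∑ i, s i • L i - b‖ ^ 2 ≤ ε * c * ‖b‖ ^ 2 / kf ^ 2 := by
  obtain ⟨δ, hδ, hb⟩ := posspan_bound L hspan
  refine ⟨1 / δ, by positivity, ?_⟩
  intro ε kf hε hkf b s ⟨hs, hmin⟩
  obtain ⟨r, hr⟩ : ∃ r : EuclideanSpace ℝ (Fin n), r = b - kf • ∑ i, s i • L i := ⟨_, rfl⟩
  have hrn : ‖kf • ∑ i, s i • L i - b‖ = ‖r‖ := by rw [hr, norm_sub_rev]
  have h0 : ε * ∑ i, s i ^ 2 ≤ ‖b‖ ^ 2 := by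
    have h := hmin (fun _ => 0) (fun _ => le_rfl)
    simp at h
    nlinarith [sq_nonneg ‖kf • ∑ i, s i • L i - b‖]
  have hkkt : ∀ i, kf * ⟪r, L i⟫_ℝ ≤ ε * s i := by
    intro i
    have key : ∀ t : ℝ, 0 < t → 2 * (kf * ⟪r, L i⟫_ℝ) ≤ 2 * (ε * s i) + t * (ε + kf ^ 2) := by
      intro t ht
      have h := hmin (fun j => s j + if j = i then t else 0) (fun j => by
        have := hs j
        split_ifs <;> linarith)
      have e1 : ∑ j, (s j + if j = i then t else 0) ^ 2 = ∑ j, s j ^ 2 + (2 * s i * t + t ^ 2) := by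
        have : ∀ j, (s j + if j = i then t else 0) ^ 2
            = s j ^ 2 + if j = i then 2 * s i * t + t ^ 2 else 0 := by
          intro j
          split_ifs with hj
          · subst hj
            ring
          · ring
        simp only [this, Finset.sum_add_distrib, Finset.sum_ite_eq', Finset.mem_univ, if_true]
      have e2 : kf • ∑ j, (s j + if j = i then t else 0) • L j - b = (kf * t) • L i - r := by
        simp only [add_smul, Finset.sum_add_distrib, ite_smul, zero_smul, Finset.sum_ite_eq',
          Finset.mem_univ, if_true, hr, smul_add, mul_smul]
        abel
      rw [e1, e2, hrn, norm_sub_sq_real, norm_smul, hunit, real_inner_smul_left,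
        real_inner_comm, mul_one, Real.norm_eq_abs, sq_abs] at h
      have h2 : 0 ≤ t * (2 * (ε * s i) + t * (ε + kf ^ 2) - 2 * (kf * ⟪r, L i⟫_ℝ)) := by
        nlinarith
      have := nonneg_of_mul_nonneg_right h2 ht
      linarith
    by_contra hc
    push Not at hc
    have hp : 0 < ε + kf ^ 2 := by positivity
    have := key ((kf * ⟪r, L i⟫_ℝ - ε * s i) / (ε + kf ^ 2)) (div_pos (by linarith) hp)
    rw [div_mul_cancel₀ _ hp.ne'] at this
    linarith
  have hsum : kf ^ 2 * ∑ i, (max 0 ⟪r, L i⟫_ℝ) ^ 2 ≤ ε ^ 2 * ∑ i, s i ^ 2 := by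
    rw [Finset.mul_sum, Finset.mul_sum]
    refine Finset.sum_le_sum fun i _ => ?_
    rw [← mul_pow, ← mul_pow]
    refine pow_le_pow_left₀ (by positivity) ?_ 2
    rw [mul_max_of_nonneg _ _ hkf.le, mul_zero]
    exact max_le (mul_nonneg hε.le (hs i)) (hkkt i)
  have h3 : kf ^ 2 * (δ * ‖r‖ ^ 2) ≤ ε * ‖b‖ ^ 2 := by
    calc kf ^ 2 * (δ * ‖r‖ ^ 2) ≤ kf ^ 2 * ∑ i, (max 0 ⟪r, L i⟫_ℝ) ^ 2 := by
          gcongr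
          exact hb r
      _ ≤ ε ^ 2 * ∑ i, s i ^ 2 := hsum
      _ = ε * (ε * ∑ i, s i ^ 2) := by ring
      _ ≤ _ := by gcongr
  rw [hrn, le_div_iff₀ (by positivity)]
  have : ε * (1 / δ) * ‖b‖ ^ 2 = ε * ‖b‖ ^ 2 / δ := by ring
  rw [this, le_div_iff₀ hδ]
  linarith
end

section
/- Let l_1, ..., l_N be unit vectors in ℝ^n that positively span ℝ^n and such that any n of them are linearly independent, and let k_f > 0. Then there exists ε̄ > 0 such that for every ε ∈ (0, ε̄) there exists δ ∈ (0, 1) with the following property: for every b ∈ ℝ^n, the unique minimizer s*(b) of QP(b) satisfies |k_f ∑_{i=1}^N s_i*(b) l_i − b| ≤ δ |b|. -/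
open InnerProductSpace

theorem aux_cover {n N : ℕ} (L : Fin N → EuclideanSpace ℝ (Fin n))
    (hspan : ∀ l : EuclideanSpace ℝ (Fin n), ‖l‖ = 1 → ∃ i, 0 < ⟪l, L i⟫_ℝ) :
    ∃ c : ℝ, 0 < c ∧ c < 1 ∧ ∀ b : EuclideanSpace ℝ (Fin n), b ≠ 0 →
      ∃ i, c * ‖b‖ ≤ ⟪b, L i⟫_ℝ := by
  have hc : ContinuousOn (fun l : EuclideanSpace ℝ (Fin n) => ∑ i, max ⟪l, L i⟫_ℝ 0)
      (Metric.sphere 0 1) := by fun_prop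
  obtain ⟨a, ha, hle⟩ := (isCompact_sphere (0 : EuclideanSpace ℝ (Fin n)) 1).exists_forall_le'
    hc (a := 0) (by
      intro l hl
      obtain ⟨i, hi⟩ := hspan l (by simpa using hl)
      exact Finset.sum_pos' (fun j _ => le_max_right _ _)
        ⟨i, Finset.mem_univ i, lt_max_of_lt_left hi⟩)
  have hN : (0 : ℝ) < N + 1 := by positivity
  have hd : 0 < a / (N + 1) := by positivity
  refine ⟨min (a / (N + 1)) (1 / 2), by positivity,
    lt_of_le_of_lt (min_le_right _ _) (by norm_num), ?_⟩
  intro b hb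
  have hb' : 0 < ‖b‖ := norm_pos_iff.mpr hb
  have h1 := hle (‖b‖⁻¹ • b) (by simp [norm_smul, hb'.ne'])
  have h2 : ∃ i, a / (N + 1) ≤ ⟪‖b‖⁻¹ • b, L i⟫_ℝ := by
    by_contra! h
    have h3 : ∑ i, max ⟪‖b‖⁻¹ • b, L i⟫_ℝ 0 ≤ ∑ _i : Fin N, a / (N + 1) :=
      Finset.sum_le_sum fun i _ => max_le (h i).le hd.le
    simp only [Finset.sum_const, Finset.card_univ, Fintype.card_fin, nsmul_eq_mul] at h3
    have h4 : (N + 1 : ℝ) * (a / (N + 1)) = a := by field_simp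
    linarith
  obtain ⟨i, hi⟩ := h2
  refine ⟨i, ?_⟩
  rw [real_inner_smul_left] at hi
  have h5 := mul_le_mul_of_nonneg_right ((min_le_left _ (1 / 2)).trans hi) hb'.le
  have h6 : ‖b‖⁻¹ * ⟪b, L i⟫_ℝ * ‖b‖ = ⟪b, L i⟫_ℝ := by field_simp
  linarith

/-- If the unit vectors `l₁, …, l_N` positively span `ℝⁿ`, any `n` of
them are linearly independent, and `k_f > 0`, then there is `ε̄ > 0` such that for
every `ε ∈ (0, ε̄)` there is `δ ∈ (0, 1)` with: for every `b`, the unique minimizer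
`s*(b)` of `QP(b)` satisfies `‖k_f ∑ᵢ sᵢ*(b) lᵢ − b‖ ≤ δ ‖b‖`. -/
theorem stmt_4 {n N : ℕ} (L : Fin N → EuclideanSpace ℝ (Fin n))
    (hunit : ∀ i, ‖L i‖ = 1)
    (hspan : ∀ l : EuclideanSpace ℝ (Fin n), ‖l‖ = 1 → ∃ i, 0 < ⟪l, L i⟫_ℝ)
    (hindep : ∀ g : Fin n → Fin N, Function.Injective g →
      LinearIndependent ℝ (fun j => L (g j)))
    (kf : ℝ) (hkf : 0 < kf) :
    ∃ εbar : ℝ, 0 < εbar ∧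
      ∀ ε : ℝ, 0 < ε → ε < εbar →
        ∃ δ : ℝ, 0 < δ ∧ δ < 1 ∧
          ∀ b : EuclideanSpace ℝ (Fin n), ∀ s : Fin N → ℝ,
            ((∀ i, 0 ≤ s i) ∧
              ∀ s' : Fin N → ℝ, (∀ i, 0 ≤ s' i) →
                ε * ∑ i, s i ^ 2 + ‖kf • ∑ i, s i • L i - b‖ ^ 2 ≤
                  ε * ∑ i, s' i ^ 2 + ‖kf • ∑ i, s' i • L i - b‖ ^ 2) →
            ‖kf • ∑ i, s i • L i - b‖ ≤ δ * ‖b‖ := by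
  obtain ⟨c, hc0, hc1, hc⟩ := aux_cover L hspan
  refine ⟨1, one_pos, fun ε hε _ => ?_⟩
  have hD : 0 < ε + kf ^ 2 := by positivity
  have hq0 : 0 < kf ^ 2 * c ^ 2 / (ε + kf ^ 2) := by positivity
  have hq1 : kf ^ 2 * c ^ 2 / (ε + kf ^ 2) < 1 := by
    rw [div_lt_one hD]
    have : c ^ 2 < 1 := by nlinarith
    nlinarith [pow_pos hkf 2]
  have hδ : 0 < 1 - kf ^ 2 * c ^ 2 / (ε + kf ^ 2) := by linarith
  refine ⟨√(1 - kf ^ 2 * c ^ 2 / (ε + kf ^ 2)), Real.sqrt_pos.mpr hδ, ?_, ?_⟩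
  · rw [Real.sqrt_lt' one_pos]; linarith
  rintro b s ⟨_, hmin⟩
  have hs2 : 0 ≤ ε * ∑ i, s i ^ 2 := by positivity
  refine (sq_le_sq₀ (norm_nonneg _) (by positivity)).mp ?_
  rw [mul_pow, Real.sq_sqrt hδ.le]
  by_cases hb : b = 0
  · have h := hmin (fun _ => 0) (fun _ => le_rfl)
    simp only [hb] at h ⊢
    simp at h ⊢
    have h0 : 0 ≤ ‖kf • ∑ i, s i • L i‖ ^ 2 := by positivity
    have h1 : ‖kf • ∑ i, s i • L i‖ ^ 2 = 0 := by linarith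
    simpa using h1
  obtain ⟨i, hi⟩ := hc b hb
  set p := ⟪b, L i⟫_ℝ with hp
  have hp0 : 0 ≤ p := le_trans (by positivity) hi
  set t := kf * p / (ε + kf ^ 2) with ht
  have ht0 : 0 ≤ t := by positivity
  have h := hmin (Pi.single i t) (fun j => by
    by_cases hj : j = i
    · subst hj; simpa using ht0
    · simp [hj])
  have e1 : ∑ j, (Pi.single i t : Fin N → ℝ) j ^ 2 = t ^ 2 := by
    rw [Finset.sum_eq_single i] <;> simp +contextual
  have e2 : ∑ j, (Pi.single i t : Fin N → ℝ) j • L j = t • L i := by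
    rw [Finset.sum_eq_single i] <;> simp +contextual
  have e3 : ‖kf • t • L i - b‖ ^ 2 = kf ^ 2 * t ^ 2 - 2 * (kf * t * p) + ‖b‖ ^ 2 := by
    rw [norm_sub_sq_real, smul_smul, norm_smul, hunit, real_inner_smul_left,
      real_inner_comm, ← hp, mul_one, Real.norm_eq_abs, sq_abs]
    ring
  rw [e1, e2, e3] at h
  have e4 : ε * t ^ 2 + (kf ^ 2 * t ^ 2 - 2 * (kf * t * p) + ‖b‖ ^ 2)
      = ‖b‖ ^ 2 - kf ^ 2 / (ε + kf ^ 2) * p ^ 2 := by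
    rw [ht]; field_simp; ring
  have h5 : (c * ‖b‖) ^ 2 ≤ p ^ 2 := pow_le_pow_left₀ (by positivity) hi 2
  have h6 := mul_le_mul_of_nonneg_left h5 (show 0 ≤ kf ^ 2 / (ε + kf ^ 2) by positivity)
  have e7 : (1 - kf ^ 2 * c ^ 2 / (ε + kf ^ 2)) * ‖b‖ ^ 2
      = ‖b‖ ^ 2 - kf ^ 2 / (ε + kf ^ 2) * (c * ‖b‖) ^ 2 := by ring
  linarith
end

section
/- Let R ∈ ℝ^{N×N} be a symmetric positive definite matrix. For each r ∈ ℝ^N, the function s ↦ (1/2) sᵀ R s + rᵀ s attains a unique minimum over the set {s ∈ ℝ^N : s_i ≥ 0 for all i}; denote the minimizer by S(r). Then the map S : ℝ^N → ℝ^N is Lipschitz continuous: there exists a constant L > 0 such that |S(r_1) − S(r_2)| ≤ L |r_1 − r_2| for all r_1, r_2 ∈ ℝ^N. -/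
open Matrix

lemma coercive_aux {N : ℕ} (R : Matrix (Fin N) (Fin N) ℝ) (hpd : R.PosDef) :
    ∃ c : ℝ, 0 < c ∧ ∀ x : EuclideanSpace ℝ (Fin N),
      c * ‖x‖ ^ 2 ≤ x.ofLp ⬝ᵥ R *ᵥ x.ofLp := by
  have hpos : ∀ x : EuclideanSpace ℝ (Fin N), x ≠ 0 → 0 < x.ofLp ⬝ᵥ R *ᵥ x.ofLp := by
    intro x hx
    have h : x.ofLp ≠ 0 := by
      intro h
      apply hx
      ext i
      simp [h]
    simpa using hpd.dotProduct_mulVec_pos h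
  have hcont : Continuous fun x : EuclideanSpace ℝ (Fin N) => x.ofLp ⬝ᵥ R *ᵥ x.ofLp := by
    simp only [dotProduct, mulVec]
    fun_prop
  rcases (Metric.sphere (0 : EuclideanSpace ℝ (Fin N)) 1).eq_empty_or_nonempty with he | hne
  · refine ⟨1, one_pos, fun x => ?_⟩
    by_cases hx : x = 0
    · simp [hx]
    · exfalso
      have : ‖x‖⁻¹ • x ∈ Metric.sphere (0 : EuclideanSpace ℝ (Fin N)) 1 := by
        simp [norm_smul, hx]
      rw [he] at this
      exact this
  · obtain ⟨y, hy, hymin⟩ := (isCompact_sphere (0 : EuclideanSpace ℝ (Fin N)) 1).exists_isMinOn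
      hne hcont.continuousOn
    have hy0 : y ≠ 0 := by
      rintro rfl
      simp at hy
    refine ⟨_, hpos y hy0, fun x => ?_⟩
    by_cases hx : x = 0
    · simp [hx]
    · have hmem : ‖x‖⁻¹ • x ∈ Metric.sphere (0 : EuclideanSpace ℝ (Fin N)) 1 := by
        simp [norm_smul, hx]
      have h := isMinOn_iff.1 hymin _ hmem
      have hn : 0 < ‖x‖ := norm_pos_iff.2 hx
      simp only [WithLp.ofLp_smul, mulVec_smul, dotProduct_smul, smul_dotProduct,
        smul_eq_mul] at h
      calc _ ≤ (‖x‖⁻¹ * (‖x‖⁻¹ * (x.ofLp ⬝ᵥ R *ᵥ x.ofLp))) * ‖x‖ ^ 2 := by gcongr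
        _ = _ := by field_simp

/-- Let `R` be a symmetric positive definite `N × N` real matrix and,
for each `r ∈ ℝᴺ`, let `S r` be the unique minimizer of `s ↦ ½ sᵀ R s + rᵀ s` over
the nonnegative orthant. Then `S` is Lipschitz continuous (in the Euclidean norm). -/
theorem stmt_5 {N : ℕ} (R : Matrix (Fin N) (Fin N) ℝ)
    (hsymm : R.IsSymm) (hpd : R.PosDef)
    (S : EuclideanSpace ℝ (Fin N) → EuclideanSpace ℝ (Fin N))
    (hfeas : ∀ r : EuclideanSpace ℝ (Fin N), ∀ i, 0 ≤ S r i)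
    (hmin : ∀ r : EuclideanSpace ℝ (Fin N), ∀ s : Fin N → ℝ, (∀ i, 0 ≤ s i) →
      (1 / 2) * ((fun i => S r i) ⬝ᵥ R *ᵥ fun i => S r i) + ((fun i => r i) ⬝ᵥ fun i => S r i) ≤
        (1 / 2) * (s ⬝ᵥ R *ᵥ s) + ((fun i => r i) ⬝ᵥ s))
    (huniq : ∀ r : EuclideanSpace ℝ (Fin N), ∀ s : Fin N → ℝ, (∀ i, 0 ≤ s i) →
      (∀ s' : Fin N → ℝ, (∀ i, 0 ≤ s' i) →
        (1 / 2) * (s ⬝ᵥ R *ᵥ s) + ((fun i => r i) ⬝ᵥ s) ≤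
          (1 / 2) * (s' ⬝ᵥ R *ᵥ s') + ((fun i => r i) ⬝ᵥ s')) →
      s = fun i => S r i) :
    ∃ Lc : ℝ, 0 < Lc ∧
      ∀ r₁ r₂ : EuclideanSpace ℝ (Fin N), ‖S r₁ - S r₂‖ ≤ Lc * ‖r₁ - r₂‖ := by
  obtain ⟨c, hc, hcoer⟩ := coercive_aux R hpd
  refine ⟨2 / c, by positivity, fun r₁ r₂ => ?_⟩
  have key : ∀ (a b : Fin N → ℝ) , ((1 / 2 : ℝ) • (a + b)) ⬝ᵥ R *ᵥ ((1 / 2 : ℝ) • (a + b)) =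
      (1 / 2) * (a ⬝ᵥ R *ᵥ a) + (1 / 2) * (b ⬝ᵥ R *ᵥ b) -
        (1 / 4) * ((a - b) ⬝ᵥ R *ᵥ (a - b)) := by
    intro a b
    simp only [mulVec_smul, dotProduct_smul, smul_dotProduct, mulVec_add, mulVec_sub,
      dotProduct_add, add_dotProduct, dotProduct_sub, sub_dotProduct, smul_eq_mul]
    ring
  have hm : ∀ i, 0 ≤ ((1 / 2 : ℝ) • ((S r₁).ofLp + (S r₂).ofLp)) i := by
    intro i
    have h1 := hfeas r₁ i
    have h2 := hfeas r₂ i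
    simp only [Pi.smul_apply, Pi.add_apply, smul_eq_mul]
    linarith
  have h1 := hmin r₁ _ hm
  have h2 := hmin r₂ _ hm
  rw [key] at h1 h2
  change (1 / 2) * ((S r₁).ofLp ⬝ᵥ R *ᵥ (S r₁).ofLp) + (r₁.ofLp ⬝ᵥ (S r₁).ofLp) ≤
    _ + r₁.ofLp ⬝ᵥ _ at h1
  change (1 / 2) * ((S r₂).ofLp ⬝ᵥ R *ᵥ (S r₂).ofLp) + (r₂.ofLp ⬝ᵥ (S r₂).ofLp) ≤
    _ + r₂.ofLp ⬝ᵥ _ at h2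
  have h3 := hcoer (S r₁ - S r₂)
  have h4 : inner ℝ (S r₁ - S r₂) (r₂ - r₁) ≤ ‖S r₁ - S r₂‖ * ‖r₂ - r₁‖ :=
    real_inner_le_norm _ _
  have h5 : inner ℝ (S r₁ - S r₂) (r₂ - r₁) =
      (r₂.ofLp - r₁.ofLp) ⬝ᵥ ((S r₁).ofLp - (S r₂).ofLp) := by
    simp [EuclideanSpace.inner_eq_star_dotProduct]
  rw [h5, norm_sub_rev r₂ r₁] at h4
  simp only [WithLp.ofLp_sub] at h3
  simp only [dotProduct_smul, dotProduct_add, dotProduct_sub, sub_dotProduct (r₂.ofLp),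
    smul_eq_mul] at h1 h2 h4
  have h6 : c * ‖S r₁ - S r₂‖ ^ 2 ≤ 2 * (‖S r₁ - S r₂‖ * ‖r₁ - r₂‖) := by
    linarith
  rw [div_mul_eq_mul_div, le_div_iff₀ hc]
  rcases (norm_nonneg (S r₁ - S r₂)).eq_or_lt with h | h
  · rw [← h]
    simp
  · refine le_of_mul_le_mul_left ?_ h
    linarith
end

section
/- Let l_1, ..., l_N be unit vectors in ℝ^n and let ε > 0, k_f > 0. For each b ∈ ℝ^n let s*(b) ∈ ℝ^N denote the unique minimizer of QP(b). Then the map b ↦ s*(b) is Lipschitz continuous on ℝ^n: there exists L_φ > 0 such that |s*(b_1) − s*(b_2)| ≤ L_φ |b_1 − b_2| for all b_1, b_2 ∈ ℝ^n. -/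
theorem qp_aux {E F : Type*} [NormedAddCommGroup E] [InnerProductSpace ℝ E]
    [NormedAddCommGroup F] [InnerProductSpace ℝ F] (ε : ℝ) (s t : E) (x y b c : F)
    (h1 : ε * ‖s‖ ^ 2 + ‖x - b‖ ^ 2 ≤
      ε * ‖(1 / 2 : ℝ) • (s + t)‖ ^ 2 + ‖(1 / 2 : ℝ) • (x + y) - b‖ ^ 2)
    (h2 : ε * ‖t‖ ^ 2 + ‖y - c‖ ^ 2 ≤
      ε * ‖(1 / 2 : ℝ) • (s + t)‖ ^ 2 + ‖(1 / 2 : ℝ) • (x + y) - c‖ ^ 2) :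
    ε * ‖s - t‖ ^ 2 ≤ ‖b - c‖ ^ 2 := by
  have h3 : 0 ≤ ‖(x - y) - (b - c)‖ ^ 2 := sq_nonneg _
  simp only [← real_inner_self_eq_norm_sq, inner_add_left, inner_add_right, inner_sub_left,
    inner_sub_right, real_inner_smul_left, real_inner_smul_right] at *
  rw [real_inner_comm s t] at *
  rw [real_inner_comm x y, real_inner_comm b x, real_inner_comm b y, real_inner_comm c x,
    real_inner_comm c y, real_inner_comm b c] at *
  linarith

/-- For unit vectors `l₁, …, l_N` in `ℝⁿ` and `ε, k_f > 0`, let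
`s*(b)` denote the unique minimizer of `QP(b)`. Then `b ↦ s*(b)` is Lipschitz
continuous: there is `L_φ > 0` with `‖s*(b₁) − s*(b₂)‖ ≤ L_φ ‖b₁ − b₂‖` for all
`b₁, b₂ ∈ ℝⁿ`. -/
theorem stmt_6 {n N : ℕ} (L : Fin N → EuclideanSpace ℝ (Fin n))
    (hunit : ∀ i, ‖L i‖ = 1) (ε kf : ℝ) (hε : 0 < ε) (hkf : 0 < kf)
    (sstar : EuclideanSpace ℝ (Fin n) → EuclideanSpace ℝ (Fin N))
    (hfeas : ∀ b, ∀ i, 0 ≤ sstar b i)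
    (hmin : ∀ b : EuclideanSpace ℝ (Fin n), ∀ s : Fin N → ℝ, (∀ i, 0 ≤ s i) →
      ε * ∑ i, sstar b i ^ 2 + ‖kf • ∑ i, sstar b i • L i - b‖ ^ 2 ≤
        ε * ∑ i, s i ^ 2 + ‖kf • ∑ i, s i • L i - b‖ ^ 2)
    (huniq : ∀ b : EuclideanSpace ℝ (Fin n), ∀ s : Fin N → ℝ, (∀ i, 0 ≤ s i) →
      (∀ s' : Fin N → ℝ, (∀ i, 0 ≤ s' i) →
        ε * ∑ i, s i ^ 2 + ‖kf • ∑ i, s i • L i - b‖ ^ 2 ≤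
          ε * ∑ i, s' i ^ 2 + ‖kf • ∑ i, s' i • L i - b‖ ^ 2) →
      s = fun i => sstar b i) :
    ∃ Lφ : ℝ, 0 < Lφ ∧
      ∀ b₁ b₂ : EuclideanSpace ℝ (Fin n), ‖sstar b₁ - sstar b₂‖ ≤ Lφ * ‖b₁ - b₂‖ := by
  have hq : ∀ b : EuclideanSpace ℝ (Fin n), ∀ s : EuclideanSpace ℝ (Fin N), (∀ i, 0 ≤ s i) →
      ε * ‖sstar b‖ ^ 2 + ‖kf • ∑ i, sstar b i • L i - b‖ ^ 2 ≤
        ε * ‖s‖ ^ 2 + ‖kf • ∑ i, s i • L i - b‖ ^ 2 := by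
    intro b s hs
    rw [EuclideanSpace.real_norm_sq_eq (sstar b), EuclideanSpace.real_norm_sq_eq s]
    exact hmin b (fun i => s i) hs
  refine ⟨1 / √ε, by positivity, fun b c => ?_⟩
  have hpos : ∀ i, 0 ≤ ((1 / 2 : ℝ) • (sstar b + sstar c)) i := by
    intro i
    have h1 := hfeas b i
    have h2 := hfeas c i
    simp only [PiLp.smul_apply, PiLp.add_apply, smul_eq_mul]
    positivity
  have hA : kf • ∑ i, ((1 / 2 : ℝ) • (sstar b + sstar c)) i • L i =
      (1 / 2 : ℝ) • (kf • ∑ i, sstar b i • L i + kf • ∑ i, sstar c i • L i) := by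
    rw [← smul_add, ← Finset.sum_add_distrib, smul_comm, Finset.smul_sum (r := (1 / 2 : ℝ))]
    congr 1
    refine Finset.sum_congr rfl fun i _ => ?_
    simp only [PiLp.smul_apply, PiLp.add_apply, smul_eq_mul, mul_smul, add_smul]
  have h1 := hq b _ hpos
  have h2 := hq c _ hpos
  rw [hA] at h1 h2
  have h3 := qp_aux ε _ _ _ _ _ _ h1 h2
  have h4 : √ε * ‖sstar b - sstar c‖ ≤ ‖b - c‖ := by
    refine abs_le_of_sq_le_sq' ?_ (norm_nonneg _) |>.2
    rw [mul_pow, Real.sq_sqrt hε.le]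
    exact h3
  rw [one_div, inv_mul_eq_div, le_div_iff₀ (by positivity), mul_comm]
  exact h4
end

section
/- Let δ ∈ (0, 1), k_v > 0, L_f > 0, L_φ > 0, and let N be a positive integer. Suppose k_p > ((2 − δ)/(1 − δ)) · N L_φ L_f. Then the 2×2 real matrix A = [[−(1−δ) k_v, L_f], [N L_φ k_v, −k_p + N L_φ L_f]] is Hurwitz, i.e., every eigenvalue of A has strictly negative real part. -/
open Matrix Polynomial

/-- If `δ ∈ (0,1)`, `k_v, L_f, L_φ > 0`, `N ≥ 1` and
`k_p > ((2 − δ)/(1 − δ)) N L_φ L_f`, then the matrix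
`A = [[−(1−δ)k_v, L_f], [N L_φ k_v, −k_p + N L_φ L_f]]` is Hurwitz: every complex
eigenvalue (root of the characteristic polynomial) has strictly negative real part. -/
theorem stmt_10 (δ kv Lf Lφ kp : ℝ) (N : ℕ)
    (hδ0 : 0 < δ) (hδ1 : δ < 1) (hkv : 0 < kv) (hLf : 0 < Lf) (hLφ : 0 < Lφ)
    (hN : 0 < N) (hkp : ((2 - δ) / (1 - δ)) * ((N : ℝ) * Lφ * Lf) < kp) :
    ∀ μ : ℂ,
      ((!![-(1 - δ) * kv, Lf; (N : ℝ) * Lφ * kv, -kp + (N : ℝ) * Lφ * Lf]).map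
          (algebraMap ℝ ℂ)).charpoly.IsRoot μ →
      μ.re < 0 := by
  intro μ h
  have hNr : (0 : ℝ) < N := by exact_mod_cast hN
  have hd : 0 < 1 - δ := by linarith
  have hM : 0 < (N : ℝ) * Lφ * Lf := by positivity
  rw [div_mul_eq_mul_div, div_lt_iff₀ hd] at hkp
  rw [Matrix.charpoly_fin_two] at h
  simp [Polynomial.IsRoot, Matrix.trace_fin_two, Matrix.det_fin_two] at h
  have hre := congrArg Complex.re h
  have him := congrArg Complex.im h
  simp [pow_two] at hre him
  generalize hMd : (N : ℝ) * Lφ * Lf = M at *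
  have hkM : 0 < kp - M := by
    have : 0 < (kp - M) * (1 - δ) := by nlinarith
    exact pos_of_mul_pos_left this hd.le
  have ha : 0 < (1 - δ) * kv + (kp - M) := by positivity
  have hb : 0 < kv * (kp * (1 - δ) - (2 - δ) * M) := mul_pos hkv (by linarith)
  have e1 : μ.re * μ.re - μ.im * μ.im + ((1 - δ) * kv + (kp - M)) * μ.re
      + kv * (kp * (1 - δ) - (2 - δ) * M) = 0 := by
    linear_combination hre + kv * hMd
  have e2 : μ.im * (2 * μ.re + ((1 - δ) * kv + (kp - M))) = 0 := by
    linear_combination him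
  by_contra! hx
  rcases mul_eq_zero.1 e2 with h0 | h0
  · rw [h0] at e1
    nlinarith [mul_nonneg ha.le hx, mul_self_nonneg μ.re]
  · linarith
end

section
/- Let a, d > 0 and b, e, c_1, c_2 ≥ 0 with b·e < a·d. Let V_1, V_2 : [0, ∞) → [0, ∞) be continuous functions whose upper right Dini derivatives satisfy D⁺V_1(t) ≤ −a V_1(t) + b V_2(t) + c_1 and D⁺V_2(t) ≤ e V_1(t) − d V_2(t) + c_2 for all t ≥ 0. Then there exist positive constants C_1, C_2, λ, depending only on a, b, d, e, such that for i = 1, 2 and all t ≥ 0, V_i(t) ≤ max{ C_1 e^{−λ t} (V_1(0) + V_2(0)), C_2 (c_1 + c_2) }. -/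
open Filter Topology

/-- The upper right Dini derivative `D⁺V(t) = limsup_{h → 0⁺} (V(t+h) − V(t))/h`,
valued in `EReal`. -/
noncomputable def upperDini (V : ℝ → ℝ) (t : ℝ) : EReal :=
  limsup (fun h : ℝ => (((V (t + h) - V t) / h : ℝ) : EReal)) (𝓝[>] 0)

theorem dini_slope {V : ℝ → ℝ} {t L r : ℝ} (h : upperDini V t ≤ (L : EReal)) (hr : L < r) :
    ∀ᶠ z in 𝓝[>] t, (V z - V t) / (z - t) < r := by
  have h1 : upperDini V t < (r : EReal) := lt_of_le_of_lt h (by exact_mod_cast hr)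
  have h2 := eventually_lt_of_limsup_lt h1
  have h3 : Tendsto (fun z : ℝ => z - t) (𝓝[>] t) (𝓝[>] 0) := by
    apply tendsto_nhdsWithin_of_tendsto_nhds_of_eventually_within
    · have : Tendsto (fun z : ℝ => z - t) (𝓝 t) (𝓝 (t - t)) :=
        (continuous_id.sub continuous_const).tendsto t
      rw [sub_self] at this
      exact this.mono_left nhdsWithin_le_nhds
    · filter_upwards [self_mem_nhdsWithin] with z hz
      exact sub_pos.2 (Set.mem_Ioi.1 hz)
  filter_upwards [h3.eventually h2] with z hz
  have hz' := EReal.coe_lt_coe_iff.1 hz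
  rwa [add_sub_cancel] at hz'

theorem weighted_bound {p q lam K : ℝ} (hp : 0 < p) (hq : 0 < q) (hl : 0 < lam)
    {V₁ V₂ f₁ f₂ : ℝ → ℝ}
    (h₁ : ContinuousOn V₁ (Set.Ici 0)) (h₂ : ContinuousOn V₂ (Set.Ici 0))
    (d₁ : ∀ t, 0 ≤ t → upperDini V₁ t ≤ (f₁ t : EReal))
    (d₂ : ∀ t, 0 ≤ t → upperDini V₂ t ≤ (f₂ t : EReal))
    (hf : ∀ t, 0 ≤ t → p * f₁ t + q * f₂ t ≤ -lam * (p * V₁ t + q * V₂ t) + K)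
    (t : ℝ) (ht : 0 ≤ t) (hK : 0 ≤ K) :
    p * V₁ t + q * V₂ t ≤ Real.exp (-lam * t) * (p * V₁ 0 + q * V₂ 0) + K / lam := by
  refine le_of_forall_pos_le_add fun ε hε => ?_
  have key := image_le_of_liminf_slope_right_lt_deriv_boundary'
    (f := fun t => p * V₁ t + q * V₂ t) (f' := fun t => p * f₁ t + q * f₂ t) (a := 0) (b := t)
    (B := fun t => Real.exp (-lam * t) * (p * V₁ 0 + q * V₂ 0) + K / lam + ε)
    (B' := fun t => Real.exp (-lam * t) * (-lam * 1) * (p * V₁ 0 + q * V₂ 0))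
    ?_ ?_ ?_ ?_ ?_ ?_
  · exact key ⟨ht, le_rfl⟩
  · exact ((continuousOn_const.mul h₁).add (continuousOn_const.mul h₂)).mono
      Set.Icc_subset_Ici_self
  · intro x hx r hr
    have hpq : 0 < p + q := by positivity
    set δ := (r - (p * f₁ x + q * f₂ x)) / (p + q) with hδ
    have hδ0 : 0 < δ := div_pos (sub_pos.2 hr) hpq
    have hδe : δ * (p + q) = r - (p * f₁ x + q * f₂ x) := div_mul_cancel₀ _ hpq.ne'
    apply Eventually.frequently
    filter_upwards [dini_slope (d₁ x hx.1) (lt_add_of_pos_right _ hδ0),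
      dini_slope (d₂ x hx.1) (lt_add_of_pos_right _ hδ0)] with z hz1 hz2
    rw [slope_def_field]
    have e1 := mul_lt_mul_of_pos_left hz1 hp
    have e2 := mul_lt_mul_of_pos_left hz2 hq
    have : (p * V₁ z + q * V₂ z - (p * V₁ x + q * V₂ x)) / (z - x)
      = p * ((V₁ z - V₁ x) / (z - x)) + q * ((V₂ z - V₂ x) / (z - x)) := by ring
    rw [this]
    linarith
  · have : 0 ≤ K / lam := by positivity
    simp
    linarith
  · fun_prop
  · intro x hx
    exact ((((((hasDerivAt_id x).const_mul (-lam)).exp).mul_const _).add_const _).add_const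
      _).hasDerivWithinAt
  · intro x hx hxe
    have h := hf x hx.1
    change p * V₁ x + q * V₂ x = _ at hxe
    rw [hxe] at h
    have e1 : lam * (K / lam) = K := by field_simp
    have e2 : 0 < lam * ε := by positivity
    change _ < Real.exp (-lam * x) * (-lam * 1) * (p * V₁ 0 + q * V₂ 0)
    linarith

/-- Small-gain comparison lemma: if `a, d > 0`, `b, e ≥ 0` with
`b e < a d`, then there are constants `C₁, C₂, λ > 0` (depending only on `a, b, d, e`)
such that for all `c₁, c₂ ≥ 0` and all continuous nonnegative `V₁, V₂` on `[0, ∞)`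
satisfying `D⁺V₁ ≤ −a V₁ + b V₂ + c₁` and `D⁺V₂ ≤ e V₁ − d V₂ + c₂`, one has
`Vᵢ(t) ≤ max{C₁ e^{−λ t}(V₁(0) + V₂(0)), C₂ (c₁ + c₂)}` for all `t ≥ 0`. -/
theorem stmt_12 (a b d e : ℝ) (ha : 0 < a) (hd : 0 < d) (hb : 0 ≤ b) (he : 0 ≤ e)
    (hbe : b * e < a * d) :
    ∃ C₁ C₂ lam : ℝ, 0 < C₁ ∧ 0 < C₂ ∧ 0 < lam ∧
      ∀ c₁ c₂ : ℝ, 0 ≤ c₁ → 0 ≤ c₂ →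
      ∀ V₁ V₂ : ℝ → ℝ,
        ContinuousOn V₁ (Set.Ici 0) → ContinuousOn V₂ (Set.Ici 0) →
        (∀ t, 0 ≤ t → 0 ≤ V₁ t) → (∀ t, 0 ≤ t → 0 ≤ V₂ t) →
        (∀ t, 0 ≤ t → upperDini V₁ t ≤ ((-a * V₁ t + b * V₂ t + c₁ : ℝ) : EReal)) →
        (∀ t, 0 ≤ t → upperDini V₂ t ≤ ((e * V₁ t + -d * V₂ t + c₂ : ℝ) : EReal)) →
        ∀ t, 0 ≤ t →
          V₁ t ≤ max (C₁ * Real.exp (-lam * t) * (V₁ 0 + V₂ 0)) (C₂ * (c₁ + c₂)) ∧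
          V₂ t ≤ max (C₁ * Real.exp (-lam * t) * (V₁ 0 + V₂ 0)) (C₂ * (c₁ + c₂)) := by
  have hΔ : 0 < a * d - b * e := sub_pos.2 hbe
  have hp : 0 < d + e := by positivity
  have hq : 0 < a + b := by positivity
  obtain ⟨p, hpd⟩ : ∃ p, p = d + e := ⟨_, rfl⟩
  obtain ⟨q, hqd⟩ : ∃ q, q = a + b := ⟨_, rfl⟩
  rw [← hpd] at hp
  rw [← hqd] at hq
  have hM : 0 < p + q := by positivity
  obtain ⟨lam, hlam⟩ : ∃ l, l = (a * d - b * e) / (p + q) := ⟨_, rfl⟩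
  have hl : 0 < lam := hlam ▸ div_pos hΔ hM
  have hlM : lam * (p + q) = a * d - b * e := by rw [hlam]; exact div_mul_cancel₀ _ hM.ne'
  obtain ⟨R, hR⟩ : ∃ R, R = 1 / p + 1 / q := ⟨_, rfl⟩
  have hR0 : 0 < R := by rw [hR]; positivity
  have hRp : 1 ≤ R * p := by
    have : R * p = 1 + p / q := by rw [hR]; field_simp
    rw [this]; have : 0 < p / q := by positivity
    linarith
  have hRq : 1 ≤ R * q := by
    have : R * q = 1 + q / p := by rw [hR]; field_simp; ring
    rw [this]; have : 0 < q / p := by positivity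
    linarith
  refine ⟨2 * R * (p + q), 2 * R * ((p + q) / lam), lam, by positivity, by positivity, hl, ?_⟩
  intro c₁ c₂ hc₁ hc₂ V₁ V₂ h₁ h₂ n₁ n₂ d₁ d₂ t ht
  have hW := weighted_bound (K := (p + q) * (c₁ + c₂)) hp hq hl h₁ h₂ d₁ d₂ (by
    intro s hs
    have v1 := n₁ s hs
    have v2 := n₂ s hs
    have : p * (-a * V₁ s + b * V₂ s + c₁) + q * (e * V₁ s + -d * V₂ s + c₂)
      = -(lam * (p + q)) * (V₁ s + V₂ s) + p * c₁ + q * c₂ := by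
      rw [hlM, hpd, hqd]; ring
    rw [this]
    have m1 : 0 ≤ lam * (q * V₁ s) := by positivity
    have m2 : 0 ≤ lam * (p * V₂ s) := by positivity
    have m3 : 0 ≤ q * c₁ := by positivity
    have m4 : 0 ≤ p * c₂ := by positivity
    linarith) t ht (by positivity)
  have v1 := n₁ t ht
  have v2 := n₂ t ht
  have w1 := n₁ 0 le_rfl
  have w2 := n₂ 0 le_rfl
  have hE := Real.exp_pos (-lam * t)
  have hW0 : p * V₁ 0 + q * V₂ 0 ≤ (p + q) * (V₁ 0 + V₂ 0) := by
    have m1 : 0 ≤ q * V₁ 0 := by positivity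
    have m2 : 0 ≤ p * V₂ 0 := by positivity
    linarith
  have hX := mul_le_mul_of_nonneg_left hW0 hE.le
  have hfin : R * (p * V₁ t + q * V₂ t) ≤
      max (2 * R * (p + q) * Real.exp (-lam * t) * (V₁ 0 + V₂ 0))
        (2 * R * ((p + q) / lam) * (c₁ + c₂)) := by
    have h3 := mul_le_mul_of_nonneg_left (hW.trans (add_le_add_left hX _)) hR0.le
    have l1 := le_max_left (2 * R * (p + q) * Real.exp (-lam * t) * (V₁ 0 + V₂ 0))
        (2 * R * ((p + q) / lam) * (c₁ + c₂))
    have l2 := le_max_right (2 * R * (p + q) * Real.exp (-lam * t) * (V₁ 0 + V₂ 0))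
        (2 * R * ((p + q) / lam) * (c₁ + c₂))
    refine h3.trans ?_
    have : R * (Real.exp (-lam * t) * ((p + q) * (V₁ 0 + V₂ 0)) + (p + q) * (c₁ + c₂) / lam)
      = (2 * R * (p + q) * Real.exp (-lam * t) * (V₁ 0 + V₂ 0)
        + 2 * R * ((p + q) / lam) * (c₁ + c₂)) / 2 := by ring
    rw [this]
    linarith
  have a1 : V₁ t ≤ R * p * V₁ t := le_mul_of_one_le_left v1 hRp
  have a2 : V₂ t ≤ R * q * V₂ t := le_mul_of_one_le_left v2 hRq
  constructor
  · refine le_trans ?_ hfin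
    linarith
  · refine le_trans ?_ hfin
    linarith
end
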